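/- The tradeoff function between two product Gaussian measures P = N(0, I_k) and Q = N(v, I_k) on ℝ^k equals G_{‖v‖₂}, i.e., T(N(0, I_k), N(v, I_k))(α) = Φ(Φ^{-1}(1 − α) − ‖v‖₂) for all α ∈ (0,1). -/

import Mathlib

open MeasureTheory ProbabilityTheory Real Set

/-- Standard normal CDF. -/
noncomputable def Phi (x : ℝ) : ℝ := ((gaussianReal 0 1) (Set.Iic x)).toReal

/-- Inverse of the standard normal CDF (on (0,1)). -/
noncomputable def PhiInv (p : ℝ) : ℝ := sInf {x : ℝ | p ≤ Phi x}

/-- Gaussian tradeoff function `G_μ`, extended by `G_μ(0)=1`, `G_μ(1)=0`. -/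
noncomputable def Gmu (μ α : ℝ) : ℝ :=
  if α ≤ 0 then 1 else if 1 ≤ α then 0 else Phi (PhiInv (1 - α) - μ)

/-- Optimal hypothesis-testing tradeoff function: minimal type-II error over
randomized tests with type-I error at most `α`. -/
noncomputable def tradeoff {Ω : Type*} [MeasurableSpace Ω] (P Q : Measure Ω) (α : ℝ) : ℝ :=
  sInf { b : ℝ | ∃ φ : Ω → ℝ, Measurable φ ∧ (∀ ω, φ ω ∈ Set.Icc (0:ℝ) 1) ∧
    (∫ ω, φ ω ∂P) ≤ α ∧ b = 1 - ∫ ω, φ ω ∂Q }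

/-- Rényi divergence of order `a > 1`. -/
noncomputable def renyiDiv {Ω : Type*} [MeasurableSpace Ω] (a : ℝ) (P Q : Measure Ω) : ℝ :=
  (a - 1)⁻¹ * Real.log (∫ ω, ((Measure.rnDeriv P Q ω).toReal) ^ a ∂Q)

/-- `(ε,δ)`-differential privacy. -/
def IsDP {X Ω : Type*} [MeasurableSpace Ω] (M : X → Measure Ω) (Neighbor : X → X → Prop)
    (ε δ : ℝ) : Prop :=
  ∀ x x', Neighbor x x' → ∀ S : Set Ω, MeasurableSet S →
    ((M x) S).toReal ≤ Real.exp ε * ((M x') S).toReal + δ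

/-- `ρ`-zero-concentrated differential privacy. -/
def IsZCDP {X Ω : Type*} [MeasurableSpace Ω] (M : X → Measure Ω) (Neighbor : X → X → Prop)
    (ρ : ℝ) : Prop :=
  ∀ x x', Neighbor x x' → ∀ a : ℝ, 1 < a → renyiDiv a (M x) (M x') ≤ ρ * a

/-- `μ`-Gaussian differential privacy. -/
def IsGDP {X Ω : Type*} [MeasurableSpace Ω] (M : X → Measure Ω) (Neighbor : X → X → Prop)
    (μ : ℝ) : Prop :=
  ∀ x x', Neighbor x x' → ∀ α ∈ Set.Icc (0:ℝ) 1, Gmu μ α ≤ tradeoff (M x) (M x') α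

/-!
The likelihood ratio of two product Gaussians with equal variances is the exponential of an affine
form, so by the Neyman–Pearson lemma half-spaces are optimal rejection regions. The linear form is
Gaussian under both laws, with the same variance `d ^ 2` and with means that differ by `d ^ 2`;
passing from one law to the other therefore shifts the standardized threshold by `d`.
-/

open scoped ENNReal NNReal

section Cdf

lemma continuous_cdf (μ : Measure ℝ) [IsProbabilityMeasure μ] [NullSingletonClass μ] :
    Continuous (cdf μ) := by
  rw [continuous_iff_continuousAt]
  intro x
  have no_jump : cdf μ x - Function.leftLim (cdf μ) x ≤ 0 := by
    rw [← ENNReal.ofReal_eq_zero, ← StieltjesFunction.measure_singleton, measure_cdf,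
      measure_singleton]
  rw [(monotone_cdf μ).continuousAt_iff_leftLim_eq_rightLim, StieltjesFunction.rightLim_eq]
  exact le_antisymm ((monotone_cdf μ).leftLim_le le_rfl) (sub_nonpos.1 no_jump)

lemma strictMono_cdf (μ : Measure ℝ) [IsProbabilityMeasure μ] [μ.IsOpenPosMeasure] :
    StrictMono (cdf μ) := by
  intro x y hxy
  have hpos : 0 < μ (Ioc x y) :=
    (isOpen_Ioo.measure_pos μ (nonempty_Ioo.2 hxy)).trans_le (measure_mono Ioo_subset_Ioc_self)
  rwa [← measure_cdf μ, StieltjesFunction.measure_Ioc, ENNReal.ofReal_pos, sub_pos] at hpos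

lemma isOpenPosMeasure_gaussianReal (m : ℝ) {v : ℝ≥0} (hv : v ≠ 0) :
    (gaussianReal m v).IsOpenPosMeasure :=
  (gaussianReal_absolutelyContinuous' m hv).isOpenPosMeasure

end Cdf

section Phi

lemma Phi_eq_cdf : Phi = cdf (gaussianReal 0 1) :=
  funext fun x => (cdf_eq_real _ x).symm

lemma PhiInv_Phi (x : ℝ) : PhiInv (Phi x) = x := by
  have := isOpenPosMeasure_gaussianReal 0 one_ne_zero
  have hPhi : StrictMono Phi := by
    rw [Phi_eq_cdf]
    exact strictMono_cdf _
  simp only [PhiInv, hPhi.le_iff_le]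
  exact csInf_Ici

lemma exists_Phi_eq {p : ℝ} (hp : p ∈ Ioo 0 1) : ∃ x, Phi x = p := by
  have := nullSingletonClass_gaussianReal (μ := 0) one_ne_zero
  rw [Phi_eq_cdf]
  exact mem_range_of_exists_le_of_exists_ge (continuous_cdf _)
    ((tendsto_cdf_atBot _).eventually_le_const hp.1).exists
    ((tendsto_cdf_atTop _).eventually_const_le hp.2).exists

lemma Phi_PhiInv {p : ℝ} (hp : p ∈ Ioo 0 1) : Phi (PhiInv p) = p := by
  obtain ⟨x, rfl⟩ := exists_Phi_eq hp
  rw [PhiInv_Phi]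

lemma gaussianReal_real_Iic_eq_Phi (m : ℝ) {v : ℝ≥0} (hv : v ≠ 0) (x : ℝ) :
    (gaussianReal m v).real (Iic x) = Phi ((x - m) / √v) := by
  have hsqrt : 0 < √(v : ℝ) := by positivity
  have standardize : (gaussianReal m v).map (fun y => (y - m) / √v) = gaussianReal 0 1 := by
    rw [← Function.comp_def (· / √(v : ℝ)) (· - m), ← Measure.map_map (by fun_prop) (by fun_prop),
      gaussianReal_map_sub_const, gaussianReal_map_div_const]
    congr 1
    · simp
    · ext
      simp [Real.sq_sqrt, hv]
  rw [Phi, ← measureReal_def, ← standardize,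
    map_measureReal_apply (by fun_prop) measurableSet_Iic]
  congr 1
  ext y
  simp only [mem_preimage, mem_Iic, div_le_div_iff_of_pos_right hsqrt, sub_le_sub_iff_right]

end Phi

section Testing

variable {Ω : Type*} [MeasurableSpace Ω]

lemma nnreal_smul_eq_withDensity_const (P : Measure Ω) (c : ℝ≥0) :
    c • P = P.withDensity fun _ => (c : ℝ≥0∞) :=
  (withDensity_const (c : ℝ≥0∞)).symm

lemma tradeoff_self (P : Measure Ω) [IsProbabilityMeasure P] {α : ℝ} (hα : α ∈ Icc 0 1) :
    tradeoff P P α = 1 - α := by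
  refine IsLeast.csInf_eq ⟨⟨fun _ => α, measurable_const, fun _ => hα, by simp, by simp⟩, ?_⟩
  rintro _ ⟨φ, -, -, hsize, rfl⟩
  exact sub_le_sub_left hsize 1

-- The gap in power, `∫_A (1 - φ) dQ - ∫_{Aᶜ} φ dQ`, is at least `c` times the gap in size.
lemma integral_le_measureReal_of_likelihoodRatio {P Q : Measure Ω} [IsFiniteMeasure P]
    [IsFiniteMeasure Q] {A : Set Ω} (hA : MeasurableSet A) {c : ℝ≥0}
    (hle : c • P.restrict A ≤ Q.restrict A) (hge : Q.restrict Aᶜ ≤ c • P.restrict Aᶜ)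
    {φ : Ω → ℝ} (hφm : Measurable φ) (hφ : ∀ ω, φ ω ∈ Icc 0 1)
    (hsize : ∫ ω, φ ω ∂P ≤ P.real A) : ∫ ω, φ ω ∂Q ≤ Q.real A := by
  have integrable_test (μ : Measure Ω) [IsFiniteMeasure μ] : Integrable φ μ :=
    .of_mem_Icc 0 1 hφm.aemeasurable (ae_of_all _ hφ)
  have gap_eq (μ : Measure Ω) [IsFiniteMeasure μ] :
      μ.real A - ∫ ω, φ ω ∂μ = ∫ ω in A, (1 - φ ω) ∂μ - ∫ ω in Aᶜ, φ ω ∂μ := by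
    rw [integral_sub (integrable_const 1) (integrable_test _), setIntegral_const,
      ← integral_add_compl hA (integrable_test μ), smul_eq_mul, mul_one]
    ring
  have gap_on : c * ∫ ω in A, (1 - φ ω) ∂P ≤ ∫ ω in A, (1 - φ ω) ∂Q := by
    rw [← smul_eq_mul, ← NNReal.smul_def, ← integral_smul_nnreal_measure]
    exact integral_mono_measure hle (ae_of_all _ fun ω => sub_nonneg.2 (hφ ω).2)
      ((integrable_const 1).sub (integrable_test _))
  have gap_off : ∫ ω in Aᶜ, φ ω ∂Q ≤ c * ∫ ω in Aᶜ, φ ω ∂P := by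
    rw [← smul_eq_mul, ← NNReal.smul_def, ← integral_smul_nnreal_measure]
    exact integral_mono_measure hge (ae_of_all _ fun ω => (hφ ω).1) (integrable_test _)
  refine sub_nonneg.1 ?_
  calc 0 ≤ c * (P.real A - ∫ ω, φ ω ∂P) := mul_nonneg c.2 (sub_nonneg.2 hsize)
    _ = c * ∫ ω in A, (1 - φ ω) ∂P - c * ∫ ω in Aᶜ, φ ω ∂P := by rw [gap_eq, mul_sub]
    _ ≤ ∫ ω in A, (1 - φ ω) ∂Q - ∫ ω in Aᶜ, φ ω ∂Q := sub_le_sub gap_on gap_off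
    _ = Q.real A - ∫ ω, φ ω ∂Q := (gap_eq Q).symm

lemma tradeoff_measureReal_of_likelihoodRatio {P Q : Measure Ω} [IsFiniteMeasure P]
    [IsFiniteMeasure Q] {A : Set Ω} (hA : MeasurableSet A) {c : ℝ≥0}
    (hle : c • P.restrict A ≤ Q.restrict A) (hge : Q.restrict Aᶜ ≤ c • P.restrict Aᶜ) :
    tradeoff P Q (P.real A) = 1 - Q.real A := by
  refine IsLeast.csInf_eq ⟨⟨A.indicator 1, measurable_one.indicator hA, fun ω => ?_, ?_, ?_⟩, ?_⟩
  · exact ⟨indicator_nonneg (fun _ _ => zero_le_one) ω,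
      indicator_le_self' (fun _ _ => zero_le_one) ω⟩
  · exact (integral_indicator_one hA).le
  · rw [integral_indicator_one hA]
  · rintro _ ⟨φ, hφm, hφ, hsize, rfl⟩
    exact sub_le_sub_left
      (integral_le_measureReal_of_likelihoodRatio hA hle hge hφm hφ hsize) 1

lemma tradeoff_of_monotone_likelihoodRatio {P Q : Measure Ω} [IsFiniteMeasure P]
    [IsFiniteMeasure Q] {T : Ω → ℝ} (hT : Measurable T) {g : ℝ → ℝ} (hg : Monotone g)
    (hQ : Q = P.withDensity fun ω => ENNReal.ofReal (g (T ω))) (r : ℝ) :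
    tradeoff P Q (P.real {ω | r < T ω}) = 1 - Q.real {ω | r < T ω} := by
  have hA : MeasurableSet {ω | r < T ω} := measurableSet_lt measurable_const hT
  refine tradeoff_measureReal_of_likelihoodRatio hA (c := (g r).toNNReal) ?_ ?_
  · rw [hQ, restrict_withDensity hA, nnreal_smul_eq_withDensity_const]
    exact withDensity_mono ((ae_restrict_iff' hA).2 (ae_of_all _ fun ω hω =>
      ENNReal.ofReal_le_ofReal (hg (le_of_lt hω))))
  · rw [hQ, restrict_withDensity hA.compl, nnreal_smul_eq_withDensity_const]
    exact withDensity_mono ((ae_restrict_iff' hA.compl).2 (ae_of_all _ fun ω hω =>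
      ENNReal.ofReal_le_ofReal (hg (not_lt.1 hω))))

end Testing

section ProductDensity

variable {ι : Type*} [Fintype ι]

lemma pi_withDensity {X : ι → Type*} [∀ i, MeasurableSpace (X i)] (μ : ∀ i, Measure (X i))
    [∀ i, IsProbabilityMeasure (μ i)] {f : ∀ i, X i → ℝ≥0∞} (hf : ∀ i, Measurable (f i))
    [∀ i, SigmaFinite ((μ i).withDensity (f i))] :
    Measure.pi (fun i => (μ i).withDensity (f i)) =
      (Measure.pi μ).withDensity fun x => ∏ i, f i (x i) := by
  refine Measure.pi_eq fun s hs => ?_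
  have indicator_prod (x : ∀ i, X i) : (univ.pi s).indicator (fun x => ∏ i, f i (x i)) x =
      ∏ i, (s i).indicator (f i) (x i) := by
    by_cases hx : x ∈ univ.pi s
    · rw [indicator_of_mem hx]
      exact Finset.prod_congr rfl fun i _ => (indicator_of_mem (hx i trivial) _).symm
    · obtain ⟨i, hi⟩ : ∃ i, x i ∉ s i := by simpa only [mem_univ_pi, not_forall] using hx
      rw [indicator_of_notMem hx, Finset.prod_eq_zero (Finset.mem_univ i)]
      exact indicator_of_notMem hi _
  have hm (i : ι) : Measurable ((s i).indicator (f i)) := (hf i).indicator (hs i)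
  rw [withDensity_apply _ (.univ_pi hs), ← lintegral_indicator (.univ_pi hs)]
  simp_rw [indicator_prod]
  rw [lintegral_prod_eq_prod_lintegral_of_indepFun _ _
    (iIndepFun_pi fun i => (hm i).aemeasurable) fun i => (hm i).comp (measurable_pi_apply i)]
  refine Finset.prod_congr rfl fun i _ => ?_
  rw [(measurePreserving_eval μ i).lintegral_comp (hm i), lintegral_indicator (hs i),
    withDensity_apply _ (hs i)]

end ProductDensity

section Gaussian

lemma gaussianReal_add_mul_eq_withDensity (m w : ℝ) (v : ℝ≥0) :
    gaussianReal (m + w * v) v = (gaussianReal m v).withDensity fun x =>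
      ENNReal.ofReal (rexp (w * x - (w * m + w ^ 2 * v / 2))) := by
  obtain rfl | hv := eq_or_ne v 0
  · rw [gaussianReal_zero_var, gaussianReal_zero_var, dirac_withDensity _]
    simp
  rw [gaussianReal_of_var_ne_zero _ hv, gaussianReal_of_var_ne_zero _ hv,
    ← withDensity_mul _ (measurable_gaussianPDF _ _) (by fun_prop)]
  congr 1
  funext x
  rw [Pi.mul_apply, gaussianPDF, gaussianPDF, ← ENNReal.ofReal_mul (gaussianPDFReal_nonneg _ _ _),
    gaussianPDFReal, gaussianPDFReal, mul_assoc (√_)⁻¹, ← Real.exp_add]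
  congr 3
  field_simp
  ring

lemma hasLaw_sum_gaussianReal {Ω ι : Type*} [MeasurableSpace Ω] [Fintype ι] {P : Measure Ω}
    {X : ι → Ω → ℝ} {m : ι → ℝ} {v : ι → ℝ≥0} (hX : ∀ i, HasLaw (X i) (gaussianReal (m i) (v i)) P)
    (hind : iIndepFun X P) :
    HasLaw (fun ω => ∑ i, X i ω) (gaussianReal (∑ i, m i) (∑ i, v i)) P where
  aemeasurable := Finset.aemeasurable_fun_sum _ fun i _ => (hX i).aemeasurable
  map_eq := by
    have := hind.isProbabilityMeasure
    have hm (i : ι) : AEMeasurable (X i) P := (hX i).aemeasurable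
    have := Measure.isProbabilityMeasure_map
      (Finset.aemeasurable_fun_sum Finset.univ fun i _ => hm i)
    refine Measure.ext_of_charFun ?_
    rw [hind.charFun_map_fun_sum_eq_prod hm]
    ext t
    simp only [Finset.prod_apply, (hX _).map_eq, charFun_gaussianReal, ← Complex.exp_sum]
    push_cast
    rw [Finset.sum_sub_distrib, Finset.mul_sum, Finset.sum_mul, Finset.sum_mul, Finset.sum_div]

variable {ι : Type*} [Fintype ι]

lemma hasLaw_linearForm_pi_gaussianReal (w m : ι → ℝ) (v : ι → ℝ≥0) :
    HasLaw (fun x : ι → ℝ => ∑ i, w i * x i)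
      (gaussianReal (∑ i, w i * m i) (∑ i, .mk (w i ^ 2) (sq_nonneg _) * v i))
      (Measure.pi fun i => gaussianReal (m i) (v i)) :=
  hasLaw_sum_gaussianReal
    (fun i => gaussianReal_const_mul
      (measurePreserving_eval (fun i => gaussianReal (m i) (v i)) i).hasLaw (w i))
    (iIndepFun_pi fun i => (measurable_const_mul (w i)).aemeasurable)

lemma pi_gaussianReal_real_lt_linearForm (w m : ι → ℝ) (v : ι → ℝ≥0)
    (hw : ∑ i, w i ^ 2 * v i ≠ 0) (r : ℝ) :
    (Measure.pi fun i => gaussianReal (m i) (v i)).real {x | r < ∑ i, w i * x i} =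
      1 - Phi ((r - ∑ i, w i * m i) / √(∑ i, w i ^ 2 * v i)) := by
  set σ : ℝ≥0 := ∑ i, .mk (w i ^ 2) (sq_nonneg _) * v i
  have hσ : (σ : ℝ) = ∑ i, w i ^ 2 * v i := by simp [σ]
  have law := hasLaw_linearForm_pi_gaussianReal w m v
  rw [law.measureReal_eq (p := (r < ·)) measurableSet_Ioi, ← hσ,
    ← gaussianReal_real_Iic_eq_Phi _ ?_ r, ← probReal_compl_eq_one_sub measurableSet_Iic, compl_Iic]
  · rfl
  · rwa [← NNReal.coe_ne_zero, hσ]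

lemma pi_gaussianReal_add_mul_eq_withDensity (m w : ι → ℝ) (v : ι → ℝ≥0) :
    (Measure.pi fun i => gaussianReal (m i + w i * v i) (v i)) =
      (Measure.pi fun i => gaussianReal (m i) (v i)).withDensity fun x => ENNReal.ofReal
        (rexp (∑ i, w i * x i - ∑ i, (w i * m i + w i ^ 2 * v i / 2))) := by
  have density (i : ι) := gaussianReal_add_mul_eq_withDensity (m i) (w i) (v i)
  have (i : ι) := density i ▸ (inferInstance : SigmaFinite (gaussianReal (m i + w i * v i) (v i)))
  simp_rw [density]
  rw [pi_withDensity _ fun i => by fun_prop]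
  simp_rw [← Finset.sum_sub_distrib, Real.exp_sum,
    ENNReal.ofReal_prod_of_nonneg fun _ _ => (Real.exp_pos _).le]

lemma tradeoff_pi_gaussianReal_one_sub_Phi (m w : ι → ℝ) (v : ι → ℝ≥0)
    (hw : ∑ i, w i ^ 2 * v i ≠ 0) (t : ℝ) :
    tradeoff (Measure.pi fun i => gaussianReal (m i) (v i))
        (Measure.pi fun i => gaussianReal (m i + w i * v i) (v i)) (1 - Phi t) =
      Phi (t - √(∑ i, w i ^ 2 * v i)) := by
  obtain ⟨d, hd⟩ : ∃ d, d = √(∑ i, w i ^ 2 * v i) := ⟨_, rfl⟩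
  have sum_eq : ∑ i, w i ^ 2 * v i = d ^ 2 := by rw [hd, Real.sq_sqrt (by positivity)]
  have hd_ne : d ≠ 0 := by
    rintro rfl
    exact hw (by simpa using sum_eq)
  have mean_eq : ∑ i, w i * (m i + w i * v i) = ∑ i, w i * m i + d ^ 2 := by
    rw [← sum_eq, ← Finset.sum_add_distrib]
    exact Finset.sum_congr rfl fun i _ => by ring
  have density_mono :
      Monotone fun s => rexp (s - ∑ i, (w i * m i + w i ^ 2 * v i / 2)) :=
    fun s t hst => Real.exp_le_exp.2 (sub_le_sub_right hst _)
  -- The threshold `∑ i, w i * m i + t * d` is the one at which the size is `1 - Phi t`.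
  have neymanPearson := tradeoff_of_monotone_likelihoodRatio
    (T := fun x : ι → ℝ => ∑ i, w i * x i) (by fun_prop) density_mono
    (pi_gaussianReal_add_mul_eq_withDensity m w v) (∑ i, w i * m i + t * d)
  have size_eq : (∑ i, w i * m i + t * d - ∑ i, w i * m i) / d = t := by
    rw [add_sub_cancel_left, mul_div_cancel_right₀ t hd_ne]
  have power_eq : (∑ i, w i * m i + t * d - (∑ i, w i * m i + d ^ 2)) / d = t - d := by
    field_simp
    ring
  rw [← hd]
  rwa [pi_gaussianReal_real_lt_linearForm w _ v hw, pi_gaussianReal_real_lt_linearForm w _ v hw,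
    ← hd, mean_eq, size_eq, power_eq, sub_sub_cancel] at neymanPearson

end Gaussian

theorem tradeoff_product_gaussian_general {ι : Type*} [Fintype ι] (a b : ι → ℝ) {v : ι → ℝ≥0}
    (hv : ∀ i, v i ≠ 0) {α : ℝ} (hα : α ∈ Ioo 0 1) :
    tradeoff (Measure.pi fun i => gaussianReal (a i) (v i))
        (Measure.pi fun i => gaussianReal (b i) (v i)) α =
      Phi (PhiInv (1 - α) - √(∑ i, (b i - a i) ^ 2 / v i)) := by
  have Phi_threshold : Phi (PhiInv (1 - α)) = 1 - α :=
    Phi_PhiInv ⟨sub_pos.2 hα.2, sub_lt_self 1 hα.1⟩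
  have hv' (i : ι) : (v i : ℝ) ≠ 0 := NNReal.coe_ne_zero.2 (hv i)
  obtain ⟨w, rfl⟩ : ∃ w : ι → ℝ, b = fun i => a i + w i * v i :=
    ⟨fun i => (b i - a i) / v i, funext fun i => by rw [div_mul_cancel₀ _ (hv' i)]; ring⟩
  have sum_eq : ∑ i, (a i + w i * v i - a i) ^ 2 / v i = ∑ i, w i ^ 2 * v i :=
    Finset.sum_congr rfl fun i _ => by
      have := hv' i
      field_simp
      ring
  rw [sum_eq]
  obtain hw | hw := eq_or_ne (∑ i, w i ^ 2 * (v i : ℝ)) 0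
  · have w_zero (i : ι) : w i = 0 := by
      have := (Finset.sum_eq_zero_iff_of_nonneg fun i _ => by positivity).1 hw i (Finset.mem_univ i)
      simpa [hv i] using this
    simp [w_zero, tradeoff_self _ (Ioo_subset_Icc_self hα), Phi_threshold]
  · rw [← tradeoff_pi_gaussianReal_one_sub_Phi a w v hw, Phi_threshold, sub_sub_cancel]

/-- The tradeoff function between the product Gaussians `N(0, I_k)` and
`N(v, I_k)` equals `G_{‖v‖₂}`. -/
theorem tradeoff_product_gaussian (k : ℕ) (v : Fin k → ℝ) :
    ∀ α ∈ Set.Ioo (0:ℝ) 1,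
      tradeoff (Measure.pi fun _ : Fin k => gaussianReal 0 1)
               (Measure.pi fun i : Fin k => gaussianReal (v i) 1) α
        = Phi (PhiInv (1 - α) - Real.sqrt (∑ i, (v i) ^ 2)) := by
  intro α hα
  simpa using tradeoff_product_gaussian_general 0 v (fun _ => one_ne_zero) hα
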